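/- arXiv:2405.10797 — 2 statements merged into one kernel-verified Lean document; each statement's English description precedes it below -/
import Mathlib

section
/- The integral of the linear function (w,x,y,z) ↦ 2w + x + 4y + 3z over the convex hull Δ in ℝ⁴ of the eight points (0,0,0,0), (1,0,0,0), (0,1,0,0), (0,0,1,0), (0,0,0,1), (0,1,0,1), (0,1,1,0), (0,0,0,2), with respect to 4-dimensional Lebesgue measure, equals 2/3. -/
open MeasureTheory

/-- The Okounkov body Δ of the quintic Del Pezzo fourfold `M₄`:
the convex hull in ℝ⁴ of the eight points
(0,0,0,0), (1,0,0,0), (0,1,0,0), (0,0,1,0), (0,0,0,1), (0,1,0,1), (0,1,1,0), (0,0,0,2). -/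
noncomputable def DeltaM4 : Set (Fin 4 → ℝ) :=
  convexHull ℝ
    ({![0,0,0,0], ![1,0,0,0], ![0,1,0,0], ![0,0,1,0],
      ![0,0,0,1], ![0,1,0,1], ![0,1,1,0], ![0,0,0,2]} : Set (Fin 4 → ℝ))

def PolyM4 : Set (Fin 4 → ℝ) :=
  {p | 0 ≤ p 0 ∧ 0 ≤ p 1 ∧ 0 ≤ p 2 ∧ 0 ≤ p 3 ∧ p 1 ≤ 1 - p 0 ∧
    2 * p 2 + p 3 ≤ 2 * (1 - p 0) ∧ p 1 + p 2 + p 3 ≤ 2 * (1 - p 0)}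

lemma comb_mem (a b c d e f : ℝ) (ha : 0 ≤ a) (hb : 0 ≤ b) (hc : 0 ≤ c) (hd : 0 ≤ d)
    (he : 0 ≤ e) (hf : 0 ≤ f) (hs : a + b + c + d + e + f ≤ 1) (p : Fin 4 → ℝ)
    (h0 : p 0 = a) (h1 : p 1 = b + d + e) (h2 : p 2 = c + e) (h3 : p 3 = d + 2 * f) :
    p ∈ DeltaM4 := by
  have hconv : Convex ℝ DeltaM4 := convex_convexHull ℝ _
  have key := hconv.sum_mem (t := Finset.univ)
    (w := ![1 - (a + b + c + d + e + f), a, b, c, d, e, f])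
    (z := ![![0,0,0,0], ![1,0,0,0], ![0,1,0,0], ![0,0,1,0], ![0,1,0,1], ![0,1,1,0], ![0,0,0,2]])
    (by intro i _; fin_cases i <;> simp <;> linarith)
    (by simp [Fin.sum_univ_succ]; ring)
    (by
      intro i _
      apply subset_convexHull
      fin_cases i <;> simp)
  convert key using 1
  ext i
  fin_cases i <;> simp [Fin.sum_univ_succ, h0, h1, h2, h3] <;> ring

lemma Delta_eq : DeltaM4 = PolyM4 := by
  apply Set.Subset.antisymm
  · apply convexHull_min
    · intro p hp
      simp only [Set.mem_insert_iff, Set.mem_singleton_iff] at hp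
      rcases hp with h | h | h | h | h | h | h | h <;> subst h <;> simp [PolyM4] <;> norm_num
    · intro p hp q hq a b ha hb hab
      obtain ⟨p0, p1, p2, p3, p4, p5, p6⟩ := hp
      obtain ⟨q0, q1, q2, q3, q4, q5, q6⟩ := hq
      have hb' : b = 1 - a := by linarith
      simp only [PolyM4, Set.mem_ofPred_eq, Pi.add_apply, Pi.smul_apply, smul_eq_mul]
      refine ⟨by positivity, by positivity, by positivity, by positivity, ?_, ?_, ?_⟩
      · have := mul_le_mul_of_nonneg_left p4 ha
        have := mul_le_mul_of_nonneg_left q4 hb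
        linarith
      · have := mul_le_mul_of_nonneg_left p5 ha
        have := mul_le_mul_of_nonneg_left q5 hb
        linarith
      · have := mul_le_mul_of_nonneg_left p6 ha
        have := mul_le_mul_of_nonneg_left q6 hb
        linarith
  · intro p hp
    obtain ⟨p0, p1, p2, p3, p4, p5, p6⟩ := hp
    rcases le_total (p 1) (p 2) with h | h
    · apply comb_mem (p 0) 0 (p 2 - p 1) 0 (p 1) (p 3 / 2) <;> linarith
    · rcases le_total (p 3) (p 1 - p 2) with h' | h'
      · apply comb_mem (p 0) (p 1 - p 2 - p 3) 0 (p 3) (p 2) 0 <;> linarith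
      · apply comb_mem (p 0) 0 0 (p 1 - p 2) (p 2) ((p 3 - p 1 + p 2) / 2) <;> linarith

def Good {n : ℕ} (F : (Fin n → ℝ) → ℝ) : Prop :=
  Measurable F ∧ (∃ C, ∀ v, ‖F v‖ ≤ C) ∧ ∀ v, F v ≠ 0 → v ∈ Set.Icc (0 : Fin n → ℝ) (fun _ => 2)

lemma Good.integrable {n : ℕ} {F : (Fin n → ℝ) → ℝ} (h : Good F) : Integrable F := by
  obtain ⟨hm, ⟨C, hC⟩, hs⟩ := h
  rw [← integrableOn_iff_integrable_of_support_subset (s := Set.Icc (0 : Fin n → ℝ) (fun _ => 2))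
    (fun v hv => hs v hv)]
  exact Measure.integrableOn_of_bounded (isCompact_Icc.measure_lt_top.ne)
    hm.aestronglyMeasurable (Filter.Eventually.of_forall hC)

lemma Good.slice {n : ℕ} {F : (Fin (n+1) → ℝ) → ℝ} (h : Good F) (t : ℝ) :
    Good (fun v : Fin n → ℝ => F (Fin.cons t v)) := by
  obtain ⟨hm, ⟨C, hC⟩, hs⟩ := h
  refine ⟨hm.comp ?_, ⟨C, fun v => hC _⟩, fun v hv => ?_⟩
  · rw [measurable_pi_iff]
    intro i
    refine Fin.cases ?_ (fun j => ?_) i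
    · simp
    · simpa using measurable_pi_apply j
  · have := hs _ hv
    exact ⟨fun i => by simpa using this.1 i.succ, fun i => by simpa using this.2 i.succ⟩

lemma Good.fubini {n : ℕ} {F : (Fin (n+1) → ℝ) → ℝ} (h : Good F) :
    ∫ v, F v = ∫ t : ℝ, ∫ v : Fin n → ℝ, F (Fin.cons t v) := by
  have mp := (volume_preserving_piFinSuccAbove (fun _ : Fin (n+1) => ℝ) 0).symm
  have e := (MeasurableEquiv.piFinSuccAbove (fun _ : Fin (n+1) => ℝ) 0).symm.measurableEmbedding
  rw [← mp.integral_comp e]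
  have hi := (mp.integrable_comp_emb e).2 h.integrable
  rw [Measure.volume_eq_prod] at hi ⊢
  refine (integral_prod _ hi).trans ?_
  simp [MeasurableEquiv.piFinSuccAbove, Fin.insertNthEquiv]

lemma integral_ite_Icc (a b : ℝ) (hab : a ≤ b) (F g : ℝ → ℝ)
    (h1 : ∀ t, a ≤ t → t ≤ b → F t = g t) (h2 : ∀ t, ¬ (a ≤ t ∧ t ≤ b) → F t = 0) :
    ∫ t, F t = ∫ t in a..b, g t := by
  have : F = (Set.Icc a b).indicator g := by
    ext t
    by_cases h : t ∈ Set.Icc a b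
    · rw [Set.indicator_of_mem h, h1 t h.1 h.2]
    · rw [Set.indicator_of_notMem h, h2 t h]
  rw [this, integral_indicator measurableSet_Icc, integral_Icc_eq_integral_Ioc,
    intervalIntegral.integral_of_le hab]

lemma poly_int (a b c0 c1 c2 c3 c4 : ℝ) (f : ℝ → ℝ)
    (hf : ∀ t, f t = c0 + c1 * t + c2 * t ^ 2 + c3 * t ^ 3 + c4 * t ^ 4) :
    ∫ t in a..b, f t = (c0 * b + c1 * b ^ 2 / 2 + c2 * b ^ 3 / 3 + c3 * b ^ 4 / 4 + c4 * b ^ 5 / 5)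
      - (c0 * a + c1 * a ^ 2 / 2 + c2 * a ^ 3 / 3 + c3 * a ^ 4 / 4 + c4 * a ^ 5 / 5) := by
  have hf' : f = fun t => c0 + c1 * t + c2 * t ^ 2 + c3 * t ^ 3 + c4 * t ^ 4 := funext hf
  apply intervalIntegral.integral_eq_sub_of_hasDerivAt
    (f := fun b => c0 * b + c1 * b ^ 2 / 2 + c2 * b ^ 3 / 3 + c3 * b ^ 4 / 4 + c4 * b ^ 5 / 5)
  · intro t _
    have h := ((((((hasDerivAt_id t).const_mul c0).add
      (((hasDerivAt_pow 2 t).const_mul c1).div_const 2)).add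
      (((hasDerivAt_pow 3 t).const_mul c2).div_const 3)).add
      (((hasDerivAt_pow 4 t).const_mul c3).div_const 4)).add
      (((hasDerivAt_pow 5 t).const_mul c4).div_const 5))
    refine HasDerivAt.congr_deriv (f := fun b => c0 * b + c1 * b ^ 2 / 2 + c2 * b ^ 3 / 3 + c3 * b ^ 4 / 4 + c4 * b ^ 5 / 5) h ?_
    rw [hf]
    push_cast
    ring
  · rw [hf']
    apply Continuous.intervalIntegrable
    fun_prop

noncomputable def GF : (Fin 4 → ℝ) → ℝ :=
  PolyM4.indicator (fun p => 2 * p 0 + p 1 + 4 * p 2 + 3 * p 3)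

lemma meas_Poly : MeasurableSet PolyM4 := by
  apply IsClosed.measurableSet
  unfold PolyM4
  simp only [Set.ofPred_and]
  refine IsClosed.inter ?_ (IsClosed.inter ?_ (IsClosed.inter ?_ (IsClosed.inter ?_
    (IsClosed.inter ?_ (IsClosed.inter ?_ ?_))))) <;>
  exact isClosed_le (by fun_prop) (by fun_prop)

lemma good_GF : Good GF := by
  refine ⟨Measurable.indicator (by fun_prop) meas_Poly, ⟨100, fun v => ?_⟩, fun v hv => ?_⟩
  · unfold GF
    by_cases h : v ∈ PolyM4
    · rw [Set.indicator_of_mem h, Real.norm_eq_abs, abs_le]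
      obtain ⟨p0, p1, p2, p3, p4, p5, p6⟩ := h
      constructor <;> linarith
    · rw [Set.indicator_of_notMem h]; norm_num
  · have h : v ∈ PolyM4 := Set.mem_of_indicator_ne_zero hv
    obtain ⟨p0, p1, p2, p3, p4, p5, p6⟩ := h
    constructor <;> intro i <;> fin_cases i <;> simp <;> linarith

lemma GF_fubini : ∫ p, GF p = ∫ w : ℝ, ∫ x : ℝ, ∫ y : ℝ, ∫ z : ℝ, GF ![w, x, y, z] := by
  rw [good_GF.fubini]
  congr 1; ext w
  rw [(good_GF.slice w).fubini]
  congr 1; ext x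
  rw [((good_GF.slice w).slice x).fubini]
  congr 1; ext y
  rw [(((good_GF.slice w).slice x).slice y).fubini]
  congr 1; ext z
  rw [integral_unique]
  simp [Measure.real, volume_pi]
  rfl

lemma GF_of (w x y z : ℝ) (h : 0 ≤ w ∧ 0 ≤ x ∧ 0 ≤ y ∧ 0 ≤ z ∧ x ≤ 1 - w ∧
    2 * y + z ≤ 2 * (1 - w) ∧ x + y + z ≤ 2 * (1 - w)) :
    GF ![w, x, y, z] = 2 * w + x + 4 * y + 3 * z := by
  unfold GF
  rw [Set.indicator_of_mem (by simpa [PolyM4] using h)]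
  simp

lemma GF_not (w x y z : ℝ) (h : ¬ (0 ≤ w ∧ 0 ≤ x ∧ 0 ≤ y ∧ 0 ≤ z ∧ x ≤ 1 - w ∧
    2 * y + z ≤ 2 * (1 - w) ∧ x + y + z ≤ 2 * (1 - w))) :
    GF ![w, x, y, z] = 0 := by
  unfold GF
  rw [Set.indicator_of_notMem]
  intro h'
  exact h (by simpa [PolyM4] using h')

lemma intz (w x y : ℝ) (hw : 0 ≤ w) (hx : 0 ≤ x) (hy : 0 ≤ y) (hxw : x ≤ 1 - w)
    (m : ℝ) (hm : m = min (2 * (1 - w) - 2 * y) (2 * (1 - w) - x - y)) (hm0 : 0 ≤ m) :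
    ∫ z : ℝ, GF ![w, x, y, z] = (2 * w + x + 4 * y) * m + 3 / 2 * m ^ 2 := by
  rw [integral_ite_Icc 0 m hm0 _ (fun z => 2 * w + x + 4 * y + 3 * z)]
  · rw [poly_int 0 m (2 * w + x + 4 * y) 3 0 0 0 _ (fun t => by ring)]
    ring
  · intro z hz hzm
    rw [hm, le_min_iff] at hzm
    exact GF_of _ _ _ _ ⟨hw, hx, hy, hz, hxw, by linarith, by linarith⟩
  · intro z hz
    apply GF_not
    rintro ⟨h1, h2, h3, h4, h5, h6, h7⟩
    exact hz ⟨h4, by rw [hm, le_min_iff]; constructor <;> linarith⟩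

lemma inty (w x : ℝ) (hw : 0 ≤ w) (hx : 0 ≤ x) (hxw : x ≤ 1 - w) :
    ∫ y : ℝ, ∫ z : ℝ, GF ![w, x, y, z] =
      2 * (1 - w) ^ 2 + 4 / 3 * (1 - w) ^ 3 + x * (1 - w) ^ 2 - x ^ 2 * (1 + 2 * (1 - w))
        + x ^ 3 / 3 := by
  rw [integral_ite_Icc 0 (1 - w) (by linarith) _ (fun y =>
    (2 * w + x + 4 * y) * (min (2 * (1 - w) - 2 * y) (2 * (1 - w) - x - y))
      + 3 / 2 * (min (2 * (1 - w) - 2 * y) (2 * (1 - w) - x - y)) ^ 2)]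
  · rw [← intervalIntegral.integral_add_adjacent_intervals (b := x)
      (Continuous.intervalIntegrable (by fun_prop) _ _)
      (Continuous.intervalIntegrable (by fun_prop) _ _)]
    rw [intervalIntegral.integral_congr (a := 0) (b := x) (g := fun y =>
      (2 * w + x + 4 * y) * (2 * (1 - w) - x - y) + 3 / 2 * (2 * (1 - w) - x - y) ^ 2)]
    · rw [intervalIntegral.integral_congr (a := x) (b := 1 - w) (g := fun y =>
        (2 * w + x + 4 * y) * (2 * (1 - w) - 2 * y) + 3 / 2 * (2 * (1 - w) - 2 * y) ^ 2)]
      · rw [poly_int 0 x ((2 * w + x) * (2 * (1 - w) - x) + 3 / 2 * (2 * (1 - w) - x) ^ 2)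
          (2 * (1 - w) - x - 2 * w - x) (-5 / 2) 0 0 _ (fun t => by ring),
          poly_int x (1 - w) (2 * (1 - w) * (2 * w + x) + 6 * (1 - w) ^ 2)
          (-4 * (1 - w) - 2 * (2 * w + x)) (-2) 0 0 _ (fun t => by ring)]
        ring
      · intro y hy
        rw [Set.uIcc_of_le hxw] at hy
        have := hy.1
        simp only
        rw [min_eq_left (by linarith)]
    · intro y hy
      rw [Set.uIcc_of_le hx] at hy
      have := hy.2
      simp only
      rw [min_eq_right (by linarith)]
  · intro y hy hyw
    exact intz w x y hw hx hy hxw _ rfl (le_min (by linarith) (by linarith))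
  · intro y hy
    rw [← integral_zero ℝ ℝ (μ := volume)]
    congr 1; ext z
    apply GF_not
    rintro ⟨h1, h2, h3, h4, h5, h6, h7⟩
    exact hy ⟨h3, by linarith⟩

lemma intx (w : ℝ) (hw : 0 ≤ w) (hw1 : w ≤ 1) :
    ∫ x : ℝ, ∫ y : ℝ, ∫ z : ℝ, GF ![w, x, y, z] =
      5 / 3 * (1 - w) ^ 3 + 5 / 4 * (1 - w) ^ 4 := by
  rw [integral_ite_Icc 0 (1 - w) (by linarith) _ _ (fun x hx hxw => inty w x hw hx hxw)]
  · rw [poly_int 0 (1 - w) (2 * (1 - w) ^ 2 + 4 / 3 * (1 - w) ^ 3) ((1 - w) ^ 2)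
      (-(1 + 2 * (1 - w))) (1 / 3) 0 _ (fun t => by ring)]
    ring
  · intro x hx
    have : ∀ y z, GF ![w, x, y, z] = 0 := by
      intro y z
      apply GF_not
      rintro ⟨h1, h2, h3, h4, h5, h6, h7⟩
      exact hx ⟨h2, by linarith⟩
    simp [this]

/-- The integral over Δ of the G-function `G_η(w,x,y,z) = 2w + x + 4y + 3z` equals `2/3`. -/
theorem integral_Geta_DeltaM4 :
    ∫ p in DeltaM4, (2 * p 0 + p 1 + 4 * p 2 + 3 * p 3) = 2 / 3 := by
  rw [Delta_eq, ← integral_indicator meas_Poly]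
  change ∫ p, GF p = _
  rw [GF_fubini, integral_ite_Icc 0 1 (by norm_num) _ _ (fun w hw hw1 => intx w hw hw1)]
  · rw [poly_int 0 1 (35 / 12) (-10) (25 / 2) (-20 / 3) (5 / 4) _ (fun t => by ring)]
    norm_num
  · intro w hw
    have : ∀ x y z, GF ![w, x, y, z] = 0 := by
      intro x y z
      apply GF_not
      rintro ⟨h1, h2, h3, h4, h5, h6, h7⟩
      exact hw ⟨h1, by linarith⟩
    simp [this]
end

section
/- Define g₄ : [0,2] → ℝ by g₄(u) = (2−u)³ − 9(2−u)(1−u)² + 10(1−u)³ for 0 ≤ u ≤ 1 and g₄(u) = (2−u)³ for 1 ≤ u ≤ 2, and let ξ₀ be the unique real number with ∫₀² (3u−2)e^{−(3u−2)ξ₀} g₄(u) du = 0. Let Δ₁ = {(u,v) ∈ ℝ² : 0 ≤ v ≤ u/2, u−1 ≤ v}, Δ₂ = {(u,v) : 0 ≤ v ≤ u−1, u ≤ 2}, and P(u,v) = (2−u)³ − 9(2−u)(1−u+v)² + 10(1−u+v)³. Then ∫_{Δ₁} e^{−(3u−2)ξ₀} P(u,v) du dv + ∫_{Δ₂} e^{−(3u−2)ξ₀}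 (2−u)³ du dv < (1/3)·∫₀² e^{−(3u−2)ξ₀} g₄(u) du. -/
open MeasureTheory intervalIntegral

/-- The volume function `g₄(u) = vol(π*O(1) − u E_S)` on the blow-up of the quintic
Del Pezzo fourfold `M₄` along the non-vertex-type plane `S`. -/
noncomputable def gFour (u : ℝ) : ℝ :=
  if u ≤ 1 then (2 - u) ^ 3 - 9 * (2 - u) * (1 - u) ^ 2 + 10 * (1 - u) ^ 3
  else (2 - u) ^ 3

/-- Region `Δ₁ = {(u,v) : 0 ≤ v ≤ u/2, u−1 ≤ v}`. -/
def Delta1F : Set (ℝ × ℝ) :=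
  {p | 0 ≤ p.2 ∧ p.2 ≤ p.1 / 2 ∧ p.1 - 1 ≤ p.2}

/-- Region `Δ₂ = {(u,v) : 0 ≤ v ≤ u−1, u ≤ 2}`. -/
def Delta2F : Set (ℝ × ℝ) :=
  {p | 0 ≤ p.2 ∧ p.2 ≤ p.1 - 1 ∧ p.1 ≤ 2}

/-- The volume polynomial `P(u,v) = (2−u)³ − 9(2−u)(1−u+v)² + 10(1−u+v)³`. -/
def PvolF (u v : ℝ) : ℝ :=
  (2 - u) ^ 3 - 9 * (2 - u) * (1 - u + v) ^ 2 + 10 * (1 - u + v) ^ 3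

theorem gFour_cont : Continuous gFour := by
  unfold gFour
  apply Continuous.if_le
  · fun_prop
  · fun_prop
  · fun_prop
  · fun_prop
  · intro x hx
    subst hx
    norm_num

def TF : Set (ℝ × ℝ) := {p | 0 ≤ p.2 ∧ p.2 ≤ p.1 / 2 ∧ p.1 ≤ 2}

theorem TF_union : Delta1F ∪ Delta2F = TF := by
  ext ⟨u, v⟩
  simp only [Delta1F, Delta2F, TF, Set.mem_union, Set.mem_ofPred_eq]
  constructor
  · rintro (⟨h1, h2, h3⟩ | ⟨h1, h2, h3⟩)
    · exact ⟨h1, h2, by linarith⟩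
    · exact ⟨h1, by linarith, h3⟩
  · rintro ⟨h1, h2, h3⟩
    rcases le_total (u - 1) v with h | h
    · exact Or.inl ⟨h1, h2, h⟩
    · exact Or.inr ⟨h1, h, h3⟩

theorem Delta1F_meas : MeasurableSet Delta1F := by
  apply IsClosed.measurableSet
  have h1 : IsClosed {p : ℝ × ℝ | 0 ≤ p.2} := isClosed_le (by fun_prop) (by fun_prop)
  have h2 : IsClosed {p : ℝ × ℝ | p.2 ≤ p.1 / 2} := isClosed_le (by fun_prop) (by fun_prop)
  have h3 : IsClosed {p : ℝ × ℝ | p.1 - 1 ≤ p.2} := isClosed_le (by fun_prop) (by fun_prop)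
  exact h1.inter (h2.inter h3)

theorem Delta2F_meas : MeasurableSet Delta2F := by
  apply IsClosed.measurableSet
  have h1 : IsClosed {p : ℝ × ℝ | 0 ≤ p.2} := isClosed_le (by fun_prop) (by fun_prop)
  have h2 : IsClosed {p : ℝ × ℝ | p.2 ≤ p.1 - 1} := isClosed_le (by fun_prop) (by fun_prop)
  have h3 : IsClosed {p : ℝ × ℝ | p.1 ≤ 2} := isClosed_le (by fun_prop) (by fun_prop)
  exact h1.inter (h2.inter h3)

theorem TF_meas : MeasurableSet TF := by
  rw [← TF_union]
  exact Delta1F_meas.union Delta2F_meas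

theorem TF_sub : TF ⊆ Set.Icc (0:ℝ) 2 ×ˢ Set.Icc (0:ℝ) 1 := by
  rintro ⟨u, v⟩ ⟨h1, h2, h3⟩
  simp only at h1 h2 h3
  refine ⟨⟨?_, ?_⟩, ⟨?_, ?_⟩⟩ <;> simp only <;> linarith

theorem intOn_TF (f : ℝ × ℝ → ℝ) (hf : Continuous f) : IntegrableOn f TF :=
  (hf.continuousOn.integrableOn_compact (isCompact_Icc.prod isCompact_Icc)).mono_set TF_sub

theorem D_null : AEDisjoint volume Delta1F Delta2F := by
  have hm : MeasurableSet {p : ℝ × ℝ | p.2 = p.1 - 1} :=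
    (isClosed_eq (by fun_prop) (by fun_prop)).measurableSet
  have h0 : volume {p : ℝ × ℝ | p.2 = p.1 - 1} = 0 := by
    rw [Measure.volume_eq_prod, Measure.measure_prod_null hm]
    filter_upwards with u
    have : Prod.mk u ⁻¹' {p : ℝ × ℝ | p.2 = p.1 - 1} = {u - 1} := by
      ext v; simp
    rw [this]
    simp
  refine measure_mono_null ?_ h0
  rintro ⟨u, v⟩ ⟨⟨_, _, h⟩, ⟨_, h', _⟩⟩
  exact le_antisymm h' h

theorem int_TF (f : ℝ → ℝ) (hf : Continuous f) :
    (∫ p in TF, f p.1) = ∫ u in (0:ℝ)..2, u / 2 * f u := by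
  have hi := intOn_TF (fun p => f p.1) (by fun_prop)
  rw [← MeasureTheory.integral_indicator TF_meas, Measure.volume_eq_prod, integral_prod,
    intervalIntegral.integral_of_le (by norm_num), ← integral_Icc_eq_integral_Ioc,
    ← MeasureTheory.integral_indicator measurableSet_Icc]
  · congr 1
    ext u
    by_cases hu : u ∈ Set.Icc (0:ℝ) 2
    · rw [Set.indicator_of_mem hu]
      have : (fun v => TF.indicator (fun p : ℝ × ℝ => f p.1) (u, v))
          = (Set.Icc 0 (u/2)).indicator (fun _ => f u) := by
        ext v
        have : (u, v) ∈ TF ↔ v ∈ Set.Icc 0 (u/2) := by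
          simp only [TF, Set.mem_ofPred_eq, Set.mem_Icc]
          have := hu.2
          tauto
        simp only [Set.indicator, this]
      rw [this, MeasureTheory.integral_indicator measurableSet_Icc, setIntegral_const]
      have h0 := hu.1
      simp [Measure.real]
      exact Or.inl (by linarith)
    · rw [Set.indicator_of_notMem hu]
      have : ∀ v, TF.indicator (fun p : ℝ × ℝ => f p.1) (u, v) = 0 := by
        intro v
        apply Set.indicator_of_notMem
        intro h
        exact hu (TF_sub h).1
      simp [this]
  · rw [← Measure.volume_eq_prod]
    exact hi.integrable_indicator TF_meas

theorem P_diff (u v : ℝ) (h : u ≤ 1) : gFour u - PvolF u v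
    = v * (9 * (2 - u) * (2 * (1 - u) + v)
      - 10 * ((1-u)^2 + (1-u)*(1-u+v) + (1-u+v)^2)) := by
  rw [gFour, if_pos h, PvolF]; ring

theorem P_le (u v : ℝ) (h : (u, v) ∈ Delta1F) : PvolF u v ≤ gFour u := by
  obtain ⟨h1, h2, h3⟩ := h
  simp only at h1 h2 h3
  by_cases hu : u ≤ 1
  · have := P_diff u v hu
    have h4 : 0 ≤ 9 * (2 - u) * (2 * (1 - u) + v)
      - 10 * ((1-u)^2 + (1-u)*(1-u+v) + (1-u+v)^2) := by
      nlinarith [mul_nonneg h1 (sub_nonneg.2 h2), mul_nonneg (sub_nonneg.2 hu) (sub_nonneg.2 h2),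
        mul_nonneg (sub_nonneg.2 hu) h1, sq_nonneg (1-u), sq_nonneg v]
    nlinarith [mul_nonneg h1 h4]
  · rw [gFour, if_neg hu, PvolF]
    have h4 : 0 ≤ 9 * (2 - u) - 10 * (1 - u + v) := by linarith
    nlinarith [mul_nonneg (sq_nonneg (1 - u + v)) h4]

theorem P_lt (u v : ℝ) (hu : u ∈ Set.Ioo (1/2:ℝ) (3/5)) (hv : v ∈ Set.Ioo (1/10:ℝ) (1/5)) :
    PvolF u v < gFour u := by
  have := P_diff u v (by linarith [hu.2])
  obtain ⟨h1, h2⟩ := hu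
  obtain ⟨h3, h4⟩ := hv
  have h4 : 0 < 9 * (2 - u) * (2 * (1 - u) + v)
      - 10 * ((1-u)^2 + (1-u)*(1-u+v) + (1-u+v)^2) := by
    nlinarith
  nlinarith [mul_pos (show 0 < v by linarith) h4]

/-- The weighted estimate `S^g(W^{E_S}_{••}; F) < 1/3 · A_{E_S}(F)` for the soliton
candidate `ξ₀` of `M₄` (the root of the displayed constraint). -/
theorem Sg_WES_F_lt (ξ₀ : ℝ)
    (hξ : (∫ u in (0:ℝ)..2, (3 * u - 2) * Real.exp (-(3 * u - 2) * ξ₀) * gFour u) = 0) :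
    (∫ p in Delta1F, Real.exp (-(3 * p.1 - 2) * ξ₀) * PvolF p.1 p.2) +
      (∫ p in Delta2F, Real.exp (-(3 * p.1 - 2) * ξ₀) * (2 - p.1) ^ 3)
      < 1 / 3 * ∫ u in (0:ℝ)..2, Real.exp (-(3 * u - 2) * ξ₀) * gFour u := by
  have hg := gFour_cont
  have hP : Continuous (fun p : ℝ × ℝ => PvolF p.1 p.2) := by unfold PvolF; fun_prop
  have s1 : Delta1F ⊆ TF := TF_union ▸ Set.subset_union_left
  have s2 : Delta2F ⊆ TF := TF_union ▸ Set.subset_union_right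
  have iφ := intOn_TF (fun p => Real.exp (-(3 * p.1 - 2) * ξ₀) * gFour p.1) (by fun_prop)
  have iP := intOn_TF (fun p => Real.exp (-(3 * p.1 - 2) * ξ₀) * PvolF p.1 p.2) (by fun_prop)
  have e2 : (∫ p in Delta2F, Real.exp (-(3 * p.1 - 2) * ξ₀) * (2 - p.1) ^ 3)
      = ∫ p in Delta2F, Real.exp (-(3 * p.1 - 2) * ξ₀) * gFour p.1 := by
    apply setIntegral_congr_fun Delta2F_meas
    rintro ⟨u, v⟩ ⟨h1, h2, h3⟩
    simp only at h1 h2 h3 ⊢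
    rw [gFour]
    split_ifs with h
    · have : u = 1 := by linarith
      subst this
      norm_num
    · rfl
  have e1 : (∫ p in Delta1F, Real.exp (-(3 * p.1 - 2) * ξ₀) * PvolF p.1 p.2)
      < ∫ p in Delta1F, Real.exp (-(3 * p.1 - 2) * ξ₀) * gFour p.1 := by
    rw [← sub_pos, ← MeasureTheory.integral_sub (iφ.mono_set s1) (iP.mono_set s1)]
    rw [setIntegral_pos_iff_support_of_nonneg_ae]
    · have hpos : 0 < volume (Set.Ioo (1/2:ℝ) (3/5) ×ˢ Set.Ioo (1/10:ℝ) (1/5)) :=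
        (isOpen_Ioo.prod isOpen_Ioo).measure_pos _ ⟨(11/20, 3/20), by
          constructor <;> constructor <;> norm_num⟩
      refine hpos.trans_le (measure_mono ?_)
      rintro ⟨u, v⟩ ⟨hu, hv⟩
      have hlt := P_lt u v hu hv
      obtain ⟨h1, h2⟩ := hu
      obtain ⟨h3, h4⟩ := hv
      simp only at h1 h2 h3 h4
      refine ⟨?_, ?_, ?_, ?_⟩
      · have := mul_pos (Real.exp_pos (-(3 * u - 2) * ξ₀)) (sub_pos.2 hlt)
        rw [Function.mem_support]
        simp only
        rw [← mul_sub]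
        exact this.ne'
      all_goals simp only; linarith
    · filter_upwards [ae_restrict_mem Delta1F_meas] with p hp
      have := mul_nonneg (Real.exp_pos (-(3 * p.1 - 2) * ξ₀)).le (sub_nonneg.2 (P_le p.1 p.2 hp))
      simp only [Pi.zero_apply]
      rw [← mul_sub]
      exact this
    · exact (iφ.mono_set s1).sub (iP.mono_set s1)
  have e3 := setIntegral_union₀ D_null Delta2F_meas.nullMeasurableSet
    (iφ.mono_set s1) (iφ.mono_set s2)
  rw [TF_union, int_TF (fun u => Real.exp (-(3 * u - 2) * ξ₀) * gFour u) (by fun_prop)] at e3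
  have e4 : (∫ u in (0:ℝ)..2, u / 2 * (Real.exp (-(3 * u - 2) * ξ₀) * gFour u))
      = 1 / 6 * (∫ u in (0:ℝ)..2, (3 * u - 2) * Real.exp (-(3 * u - 2) * ξ₀) * gFour u)
        + 1 / 3 * ∫ u in (0:ℝ)..2, Real.exp (-(3 * u - 2) * ξ₀) * gFour u := by
    rw [← intervalIntegral.integral_const_mul, ← intervalIntegral.integral_const_mul,
      ← intervalIntegral.integral_add]
    · congr 1
      ext u
      ring
    · exact Continuous.intervalIntegrable (by fun_prop) _ _
    · exact Continuous.intervalIntegrable (by fun_prop) _ _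
  rw [hξ] at e4
  rw [e2]
  linarith
end
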